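/- Fix real numbers x0 < x1 and y ∈ (x0, x1], and let α : ℝ → ℝ be Lebesgue integrable and square-integrable on (x0, x1), with ‖α‖ := ∫_{x0}^{x1} |α| and ‖α‖₂ := ( ∫_{x0}^{x1} |α|² )^{1/2}. Then there exists a function g : ℝ → ℂ which vanishes outside [0, 2(y − x0)], is Lebesgue integrable and square-integrable, satisfies ( ∫_ℝ |g|² )^{1/2} ≤ ( ‖α‖₂ / √2 ) · exp( √(x1 − x0) · ‖α‖₂ ), and such that for every ω ∈ ℝ, E_α^{(x0,y)}(ω) = 1 + ∫_ℝ g(t)·e^{iωt} dt. -/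

import Mathlib

open MeasureTheory

/-- The iterates `A_ω^j 𝟙` of the conjugate-linear Volterra operator
`A_ω f(t) = ∫_{x0}^t α(s) e^{2i(s−x0)ω} conj(f(s)) ds`. -/
noncomputable def Aiter (x0 : ℝ) (α : ℝ → ℝ) (ω : ℂ) : ℕ → ℝ → ℂ
  | 0 => fun _ => 1
  | j + 1 => fun t =>
      ∫ s in x0..t,
        (α s : ℂ) * Complex.exp (2 * Complex.I * ((s : ℂ) - (x0 : ℂ)) * ω)
          * (starRingEnd ℂ) (Aiter x0 α ω j s)

/-- The harmonic exponential `E_α^{(x0,y)}(ω) = Σ_{j≥0} A_ω^j 𝟙(y)`. -/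
noncomputable def harmE (x0 y : ℝ) (α : ℝ → ℝ) (ω : ℂ) : ℂ :=
  ∑' j : ℕ, Aiter x0 α ω j y

noncomputable abbrev HL2 := Lp ℝ 2 (volume : Measure ℝ)

def reflC (c : ℝ) : C(ℝ, ℝ) := ⟨fun v => c - v, by fun_prop⟩

theorem reflC_mp (c : ℝ) : MeasurePreserving (reflC c) volume volume :=
  Measure.measurePreserving_sub_left volume c

noncomputable def UL2 (c : ℝ) (f : HL2) : HL2 :=
  Lp.compMeasurePreserving (reflC c) (reflC_mp c) f

theorem UL2_coe (c : ℝ) (f : HL2) : ∀ᵐ v, UL2 c f v = f (c - v) :=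
  Lp.coeFn_compMeasurePreserving f (reflC_mp c)

theorem UL2_norm (c : ℝ) (f : HL2) : ‖UL2 c f‖ = ‖f‖ :=
  Lp.norm_compMeasurePreserving f (reflC_mp c)

theorem UL2_cont {c : ℝ → ℝ} {g : ℝ → HL2} (hc : Continuous c) (hg : Continuous g) :
    Continuous fun s => UL2 (c s) (g s) := by
  refine Continuous.compMeasurePreservingLp hg (g := fun s => reflC (c s)) ?_ (fun s => reflC_mp _)
    (by simp)
  refine ContinuousMap.continuous_of_continuous_uncurry _ ?_
  simp only [reflC]
  change Continuous fun p : ℝ × ℝ => c p.1 - p.2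
  fun_prop

noncomputable def expK (ω K : ℝ) : ℝ → ℂ :=
  (Set.Icc 0 K).indicator fun v => Complex.exp (-(Complex.I * ω * v))

theorem expK_memLp (ω K : ℝ) : MemLp (expK ω K) 2 volume := by
  unfold expK
  rw [memLp_indicator_iff_restrict measurableSet_Icc]
  exact MemLp.of_bound (C := 1) (by fun_prop) (Filter.Eventually.of_forall fun v => by
    rw [Complex.norm_exp]; simp)

noncomputable def pairL (ω K : ℝ) : HL2 →L[ℝ] ℂ :=
  ((innerSL ℂ (expK_memLp ω K).toLp).restrictScalars ℝ).comp
    (Complex.ofRealCLM.compLpL 2 volume)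

theorem pairL_apply (ω K : ℝ) (f : HL2) :
    pairL ω K f = ∫ v in Set.Icc 0 K, (f v : ℂ) * Complex.exp (Complex.I * ω * v) := by
  have h : pairL ω K f = inner ℂ (expK_memLp ω K).toLp (Complex.ofRealCLM.compLp f) := rfl
  rw [h, L2.inner_def, ← integral_indicator measurableSet_Icc]
  apply integral_congr_ae
  filter_upwards [(expK_memLp ω K).coeFn_toLp, Complex.ofRealCLM.coeFn_compLp f] with v h1 h2
  rw [h1, h2]
  by_cases hv : v ∈ Set.Icc 0 K
  · simp [expK, hv, ← Complex.exp_conj]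
  · simp [expK, hv]

def SupL (c : ℝ) (f : HL2) : Prop := ∀ᵐ v, v ∉ Set.Icc 0 c → f v = 0

theorem SupL.mono {c d : ℝ} (h : c ≤ d) {f : HL2} (hf : SupL c f) : SupL d f := by
  filter_upwards [hf] with v hv h'
  exact hv fun h2 => h' ⟨h2.1, h2.2.trans h⟩

theorem SupL.U {c : ℝ} {f : HL2} (hf : SupL c f) : SupL c (UL2 c f) := by
  have := (reflC_mp c).quasiMeasurePreserving.ae hf
  filter_upwards [UL2_coe c f, this] with v h1 h2 h3
  rw [h1]
  apply h2
  intro h4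
  simp only [reflC, ContinuousMap.coe_mk, Set.mem_Icc] at h4
  exact h3 ⟨by linarith [h4.2], by linarith [h4.1]⟩

theorem supL_iff (c : ℝ) (f : HL2) :
    SupL c f ↔ LpToLpRestrictCLM ℝ ℝ ℝ volume 2 (Set.Icc 0 c)ᶜ f = 0 := by
  rw [Lp.eq_zero_iff_ae_eq_zero]
  have h := LpToLpRestrictCLM_coeFn ℝ (Set.Icc 0 c)ᶜ f
  change (∀ᵐ v, v ∈ (Set.Icc 0 c)ᶜ → f v = 0) ↔ _
  rw [← ae_restrict_iff' (s := (Set.Icc 0 c)ᶜ) (p := fun v => f v = 0)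
    measurableSet_Icc.compl]
  constructor
  · intro h'
    filter_upwards [h, h'] with v h1 h2
    simp [h1, h2]
  · intro h'
    filter_upwards [h, h'] with v h1 h2
    rw [← h1, h2]; rfl

theorem supL_integral {c a b : ℝ} {F : ℝ → HL2} (hab : a ≤ b)
    (hF : IntervalIntegrable F volume a b)
    (h : ∀ s ∈ Set.Ioc a b, SupL c (F s)) : SupL c (∫ s in a..b, F s) := by
  rw [supL_iff, ← ContinuousLinearMap.intervalIntegral_comp_comm _ hF,
    intervalIntegral.integral_of_le hab]
  rw [setIntegral_congr_fun measurableSet_Ioc (g := fun _ => 0)]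
  · simp
  · intro s hs
    exact (supL_iff _ _).1 (h s hs)

theorem pairL_full {ω K c : ℝ} (hc : c ≤ K) {f : HL2} (hf : SupL c f) :
    pairL ω K f = ∫ v : ℝ, (f v : ℂ) * Complex.exp (Complex.I * ω * v) := by
  rw [pairL_apply]
  apply setIntegral_eq_integral_of_ae_compl_eq_zero
  filter_upwards [hf.mono hc] with v hv h
  rw [hv h]; simp

theorem pairL_U {ω K c : ℝ} (hc : c ≤ K) {f : HL2} (hf : SupL c f) :
    pairL ω K (UL2 c f) = Complex.exp (Complex.I * ω * c) * (starRingEnd ℂ) (pairL ω K f) := by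
  rw [pairL_full hc hf, pairL_full hc hf.U, ← integral_conj, ← integral_const_mul,
    ← integral_sub_left_eq_self _ volume c]
  apply integral_congr_ae
  have := (reflC_mp c).quasiMeasurePreserving.ae (UL2_coe c f)
  filter_upwards [this] with v hv
  simp only [reflC, ContinuousMap.coe_mk, sub_sub_cancel] at hv
  rw [hv, map_mul, Complex.conj_ofReal, ← Complex.exp_conj, mul_left_comm, ← Complex.exp_add]
  congr 2
  simp
  ring

theorem indL_memLp (f : HL2) (c : ℝ) : MemLp ((Set.Ioc 0 c).indicator f) 2 volume :=
  (Lp.memLp f).indicator measurableSet_Ioc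

noncomputable def indL (f : HL2) (c : ℝ) : HL2 := (indL_memLp f c).toLp

theorem indL_coe (f : HL2) (c : ℝ) : indL f c =ᵐ[volume] (Set.Ioc 0 c).indicator f :=
  (indL_memLp f c).coeFn_toLp

theorem indL_sup (f : HL2) (c : ℝ) : SupL c (indL f c) := by
  filter_upwards [indL_coe f c] with v h1 h2
  rw [h1, Set.indicator_of_notMem]
  exact fun h => h2 ⟨h.1.le, h.2⟩

theorem indL_norm (f : HL2) (c : ℝ) : ‖indL f c‖ ≤ ‖f‖ := by
  apply Lp.norm_le_norm_of_ae_le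
  filter_upwards [indL_coe f c] with v h1
  rw [h1]
  exact norm_indicator_le_norm_self _ _

theorem indL_cont (f : HL2) : Continuous (indL f) := by
  rw [continuous_iff_continuousAt]
  intro c
  unfold ContinuousAt indL
  rw [Lp.tendsto_Lp_iff_tendsto_eLpNorm'']
  simp_rw [eLpNorm_eq_lintegral_rpow_enorm_toReal (p := 2) (by simp) (by simp)]
  have hfin : ∫⁻ v, ‖f v‖ₑ ^ (2:ENNReal).toReal ≠ ⊤ :=
    (lintegral_rpow_enorm_lt_top_of_eLpNorm_lt_top (by simp) (by simp) (Lp.memLp f).2).ne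
  have key : Filter.Tendsto (fun d => ∫⁻ v, ‖((Set.Ioc 0 d).indicator f - (Set.Ioc 0 c).indicator f) v‖ₑ
      ^ (2:ENNReal).toReal) (nhds c) (nhds (∫⁻ v : ℝ, 0)) := by
    apply tendsto_lintegral_filter_of_dominated_convergence (fun v => ‖f v‖ₑ ^ (2:ENNReal).toReal)
    · refine Filter.Eventually.of_forall fun d => ?_
      have : Measurable (f : ℝ → ℝ) := (Lp.stronglyMeasurable f).measurable
      exact (((this.indicator measurableSet_Ioc).sub
        (this.indicator measurableSet_Ioc)).enorm.pow_const _)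
    · refine Filter.Eventually.of_forall fun d => Filter.Eventually.of_forall fun v => ?_
      gcongr
      by_cases h1 : v ∈ Set.Ioc 0 d <;> by_cases h2 : v ∈ Set.Ioc 0 c <;>
        simp only [Pi.sub_apply, Set.indicator_of_mem, Set.indicator_of_notMem, h1, h2, sub_self,
          not_false_eq_true, sub_zero, zero_sub, enorm_neg, enorm_zero, zero_le, le_refl]
    · exact hfin
    · have hne : ∀ᵐ v : ℝ, v ≠ c := by simp [ae_iff, measure_singleton]
      filter_upwards [hne] with v hv
      apply tendsto_const_nhds.congr'
      have : ∀ᶠ d in nhds c, (v ≤ d ↔ v ≤ c) := by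
        rcases lt_or_gt_of_ne hv with h | h
        · filter_upwards [lt_mem_nhds h] with d hd
          simp [hd.le, h.le]
        · filter_upwards [gt_mem_nhds h] with d hd
          simp [not_le.2 hd, not_le.2 h]
      filter_upwards [this] with d hd
      have : (Set.Ioc 0 d).indicator f v = (Set.Ioc 0 c).indicator f v := by
        simp only [Set.indicator, Set.mem_Ioc, hd]
      simp [this]
  simp only [lintegral_zero] at key
  have := (ENNReal.continuous_rpow_const (y := 1 / (2:ENNReal).toReal)).tendsto 0 |>.comp key
  simpa [Function.comp_def] using this

/-- The densities. -/
noncomputable def Ghx (x0 : ℝ) (α : ℝ → ℝ) (β : HL2) : ℕ → ℝ → HL2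
  | 0 => fun t => indL β (2 * (t - x0))
  | n + 1 => fun t => ∫ s in x0..t, α s • UL2 (2 * (s - x0)) (Ghx x0 α β n s)

theorem Ghx_int_of {α : ℝ → ℝ} (hα : Integrable α) (x0 : ℝ) {g : ℝ → HL2} (hg : Continuous g)
    (a b : ℝ) : IntervalIntegrable (fun s => α s • UL2 (2 * (s - x0)) (g s)) volume a b :=
  hα.intervalIntegrable.smul_continuousOn (UL2_cont (by fun_prop) hg).continuousOn

theorem Ghx_cont {α : ℝ → ℝ} (hα : Integrable α) (x0 : ℝ) (β : HL2) (n : ℕ) :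
    Continuous (Ghx x0 α β n) := by
  induction n with
  | zero => exact (indL_cont β).comp (g := indL β) (f := fun t => 2 * (t - x0)) (by fun_prop)
  | succ n ih => exact intervalIntegral.continuous_primitive (Ghx_int_of hα x0 ih) x0

theorem Ghx_int {α : ℝ → ℝ} (hα : Integrable α) (x0 : ℝ) (β : HL2) (n : ℕ)
    (a b : ℝ) : IntervalIntegrable (fun s => α s • UL2 (2 * (s - x0)) (Ghx x0 α β n s)) volume a b :=
  Ghx_int_of hα x0 (Ghx_cont hα x0 β n) a b

theorem SupL.smul {c r : ℝ} {f : HL2} (hf : SupL c f) : SupL c (r • f) := by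
  rw [supL_iff] at *
  rw [map_smul, hf, smul_zero]

theorem Ghx_sup {α : ℝ → ℝ} (hα : Integrable α) (x0 : ℝ) (β : HL2) (n : ℕ) :
    ∀ t, x0 ≤ t → SupL (2 * (t - x0)) (Ghx x0 α β n t) := by
  induction n with
  | zero => intro t _; exact indL_sup _ _
  | succ n ih =>
    intro t ht
    refine supL_integral ht (Ghx_int hα x0 β n x0 t) fun s hs => SupL.smul ?_
    exact (ih s hs.1.le).U.mono (by linarith [hs.2])

theorem prim_pow {α : ℝ → ℝ} (hα : Integrable α) {x0 t : ℝ} (ht : x0 ≤ t) (n : ℕ) :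
    ∫ s in x0..t, |α s| * ((∫ r in x0..s, |α r|) ^ n / n.factorial)
      ≤ (∫ r in x0..t, |α r|) ^ (n + 1) / (n + 1).factorial := by
  set a : ℝ → ℝ := fun s => ∫ r in x0..s, |α r| with ha
  have hmono : MonotoneOn a (Set.Icc x0 t) := by
    intro u hu v hv huv
    have : a v - a u = ∫ r in u..v, |α r| :=
      intervalIntegral.integral_interval_sub_left hα.abs.intervalIntegrable
        hα.abs.intervalIntegrable
    have h2 : 0 ≤ ∫ r in u..v, |α r| :=
      intervalIntegral.integral_nonneg huv fun _ _ => abs_nonneg _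
    linarith
  have hnn : ∀ s ∈ Set.Icc x0 t, 0 ≤ a s := fun s hs =>
    intervalIntegral.integral_nonneg hs.1 fun _ _ => abs_nonneg _
  set F : ℝ → ℝ := fun s => a s ^ (n + 1) / (n + 1).factorial with hF
  have hFm : MonotoneOn F (Set.uIcc x0 t) := by
    rw [Set.uIcc_of_le ht]
    intro u hu v hv huv
    have h1 := hmono hu hv huv
    have h2 := hnn u hu
    simp only [hF]
    gcongr
  have h := hFm.intervalIntegral_deriv_mem_uIcc
  have hF0 : F x0 = 0 := by simp [hF, ha]
  have hFt : 0 ≤ F t := by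
    have := hnn t ⟨ht, le_rfl⟩
    simp only [hF]; positivity
  rw [hF0, sub_zero, Set.uIcc_of_le hFt] at h
  refine le_trans (le_of_eq ?_) h.2
  apply intervalIntegral.integral_congr_ae
  filter_upwards [LocallyIntegrable.ae_hasDerivAt_integral hα.abs.locallyIntegrable] with s hs _
  have hd : HasDerivAt F _ s := ((hs x0).pow (n + 1)).div_const ((n + 1).factorial : ℝ)
  rw [hd.deriv, Nat.factorial_succ]
  have : (n.factorial : ℝ) ≠ 0 := by positivity
  have : (n + 1 : ℝ) ≠ 0 := by positivity
  push_cast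
  field_simp

theorem Ghx_norm {α : ℝ → ℝ} (hα : Integrable α) (x0 : ℝ) (β : HL2) (n : ℕ) :
    ∀ t, x0 ≤ t → ‖Ghx x0 α β n t‖ ≤ ‖β‖ * ((∫ r in x0..t, |α r|) ^ n / n.factorial) := by
  induction n with
  | zero => intro t _; simpa [Ghx] using indL_norm β _
  | succ n ih =>
    intro t ht
    have hc : Continuous fun s => ∫ r in x0..s, |α r| := hα.abs.continuous_primitive x0
    calc ‖Ghx x0 α β (n + 1) t‖ ≤ ∫ s in x0..t, ‖β‖ * (|α s| * ((∫ r in x0..s, |α r|) ^ n / n.factorial)) := by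
          refine intervalIntegral.norm_integral_le_of_norm_le ht ?_ ?_
          · refine Filter.Eventually.of_forall fun s hs => ?_
            rw [norm_smul, UL2_norm, Real.norm_eq_abs, mul_left_comm]
            exact mul_le_mul_of_nonneg_left (ih s hs.1.le) (abs_nonneg _)
          · refine IntervalIntegrable.const_mul ?_ _
            refine hα.abs.intervalIntegrable.mul_continuousOn ?_
            exact ((hc.pow n).div_const _).continuousOn
      _ = ‖β‖ * ∫ s in x0..t, |α s| * ((∫ r in x0..s, |α r|) ^ n / n.factorial) := by
          rw [intervalIntegral.integral_const_mul]
      _ ≤ _ := mul_le_mul_of_nonneg_left (prim_pow hα ht n) (norm_nonneg _)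

theorem pair_zero {x0 : ℝ} (α : ℝ → ℝ) (β : HL2)
    (hβ : ∀ᵐ v, β v = 2⁻¹ * α (x0 + v / 2)) (ω K t : ℝ) (ht : x0 ≤ t)
    (htK : 2 * (t - x0) ≤ K) :
    pairL ω K (Ghx x0 α β 0 t) = Aiter x0 α ω 1 t := by
  have h0 : (0:ℝ) ≤ 2 * (t - x0) := by linarith
  rw [pairL_full htK (f := Ghx x0 α β 0 t) (indL_sup _ _)]
  simp only [Ghx, Aiter, map_one, mul_one]
  have h1 := intervalIntegral.inv_smul_integral_comp_add_div (a := 0) (b := 2 * (t - x0))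
    (fun s : ℝ => (α s : ℂ) * Complex.exp (2 * Complex.I * ((s : ℂ) - (x0 : ℂ)) * ω)) 2 x0
  have e1 : x0 + 0 / 2 = x0 := by ring
  have e2 : x0 + 2 * (t - x0) / 2 = t := by ring
  rw [e1, e2] at h1
  rw [← h1, intervalIntegral.integral_of_le h0, ← integral_smul,
    ← integral_indicator measurableSet_Ioc]
  apply integral_congr_ae
  filter_upwards [indL_coe β (2 * (t - x0)), hβ] with v h2 h3
  rw [h2]
  by_cases hv : v ∈ Set.Ioc 0 (2 * (t - x0))
  · rw [Set.indicator_of_mem hv, Set.indicator_of_mem hv, h3, Complex.real_smul]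
    push_cast
    rw [mul_assoc]
    congr 3
    ring
  · rw [Set.indicator_of_notMem hv, Set.indicator_of_notMem hv]; simp

theorem pair_Ghx {x0 : ℝ} {α : ℝ → ℝ} (hα : Integrable α) (β : HL2)
    (hβ : ∀ᵐ v, β v = 2⁻¹ * α (x0 + v / 2)) (ω K : ℝ) (n : ℕ) : ∀ t, x0 ≤ t →
    2 * (t - x0) ≤ K → 
    pairL ω K (Ghx x0 α β n t) = Aiter x0 α ω (n + 1) t := by
  induction n with
  | zero => intro t ht htK; exact pair_zero α β hβ ω K t ht htK
  | succ n ih =>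
    intro t ht htK
    rw [Aiter, Ghx, ← ContinuousLinearMap.intervalIntegral_comp_comm _ (Ghx_int hα x0 β n x0 t)]
    beta_reduce
    rw [intervalIntegral.integral_of_le ht, intervalIntegral.integral_of_le ht]
    refine setIntegral_congr_fun measurableSet_Ioc fun s hs => ?_
    have hsK : 2 * (s - x0) ≤ K := by linarith [hs.2]
    simp only [map_smul]
    rw [pairL_U hsK (Ghx_sup hα x0 β n s hs.1.le), ih s hs.1.le hsK, Complex.real_smul, ← mul_assoc]
    congr 3
    push_cast
    ring

theorem Aiter_congr {x0 x1 : ℝ} (α α' : ℝ → ℝ) (h : ∀ s ∈ Set.Ioc x0 x1, α s = α' s) (ω : ℂ)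
    (n : ℕ) : ∀ t, x0 ≤ t → t ≤ x1 → Aiter x0 α ω n t = Aiter x0 α' ω n t := by
  induction n with
  | zero => intro t _ _; rfl
  | succ n ih =>
    intro t ht ht1
    rw [Aiter, Aiter]
    beta_reduce
    rw [intervalIntegral.integral_of_le ht, intervalIntegral.integral_of_le ht]
    refine setIntegral_congr_fun measurableSet_Ioc fun s hs => ?_
    rw [h s ⟨hs.1, hs.2.trans ht1⟩, ih s hs.1.le (hs.2.trans ht1)]

theorem L2_norm_sqrt (f : HL2) : ‖f‖ = Real.sqrt (∫ t, ‖f t‖ ^ 2) := by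
  have h : ‖f‖ ^ 2 = ∫ t, ‖f t‖ ^ 2 := by
    rw [← real_inner_self_eq_norm_sq, L2.inner_def]
    simp
  rw [← h, Real.sqrt_sq (norm_nonneg _)]

theorem cs_bound {a b : ℝ} (hab : a ≤ b) {α : ℝ → ℝ} (hα : Integrable α)
    (hα2 : Integrable fun x => α x ^ 2) :
    ∫ x in a..b, |α x| ≤ Real.sqrt (b - a) * Real.sqrt (∫ x in a..b, |α x| ^ 2) := by
  rw [intervalIntegral.integral_of_le hab, intervalIntegral.integral_of_le hab]
  have h1 : MemLp (fun _ : ℝ => (1:ℝ)) (ENNReal.ofReal 2) (volume.restrict (Set.Ioc a b)) :=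
    memLp_const _
  have h2 : MemLp (fun x => |α x|) (ENNReal.ofReal 2) (volume.restrict (Set.Ioc a b)) := by
    rw [show ENNReal.ofReal 2 = 2 by simp]
    refine (memLp_two_iff_integrable_sq hα.abs.aestronglyMeasurable.restrict).2 ?_
    simp only [sq_abs]
    exact hα2.integrableOn
  have := integral_mul_le_Lp_mul_Lq_of_nonneg (μ := volume.restrict (Set.Ioc a b))
    Real.HolderConjugate.two_two (f := fun _ => (1:ℝ)) (g := fun x => |α x|)
    (Filter.Eventually.of_forall fun _ => zero_le_one)
    (Filter.Eventually.of_forall fun _ => abs_nonneg _) h1 h2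
  simp only [one_mul, Real.one_rpow, integral_const, smul_eq_mul, mul_one] at this
  rw [Real.sqrt_eq_rpow, Real.sqrt_eq_rpow]
  simpa [hab, max_eq_left (sub_nonneg.2 hab), measureReal_def] using this

/-- Proposition (prop-harmonic-2)(v) with the explicit estimate (minkowski-h-check):
if `α ∈ L¹ ∩ L²`, then `E_α^{(x0,y)} − 1` is the Fourier transform of an `L¹ ∩ L²`
density `g` supported in `[0, 2(y − x0)]` with
`‖g‖_{L²} ≤ (‖α‖₂/√2) exp(√(x1 − x0)·‖α‖₂)`. -/
theorem harmonic_exponential_L2_fourier_representation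
    (x0 x1 y : ℝ) (hx : x0 < x1) (hy : y ∈ Set.Ioc x0 x1)
    (α : ℝ → ℝ)
    (hα : IntegrableOn α (Set.Ioo x0 x1))
    (hα2 : IntegrableOn (fun x => |α x| ^ 2) (Set.Ioo x0 x1))
    (N₂ : ℝ) (hN₂ : N₂ = Real.sqrt (∫ x in x0..x1, |α x| ^ 2)) :
    ∃ g : ℝ → ℂ,
      (∀ t ∉ Set.Icc (0 : ℝ) (2 * (y - x0)), g t = 0) ∧
      Integrable g ∧
      Integrable (fun t : ℝ => ‖g t‖ ^ 2) ∧
      Real.sqrt (∫ t : ℝ, ‖g t‖ ^ 2)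
        ≤ (N₂ / Real.sqrt 2) * Real.exp (Real.sqrt (x1 - x0) * N₂) ∧
      ∀ ω : ℝ, harmE x0 y α (ω : ℂ)
        = 1 + ∫ t : ℝ, g t * Complex.exp (Complex.I * (ω : ℂ) * (t : ℂ)) := by
  obtain ⟨hy0, hy1⟩ := hy
  set α' : ℝ → ℝ := (Set.Ioc x0 x1).indicator α with hα'def
  have hαα' : ∀ s ∈ Set.Ioc x0 x1, α s = α' s := fun s hs => by
    rw [hα'def, Set.indicator_of_mem hs]
  have hα' : Integrable α' := by
    rw [hα'def, integrable_indicator_iff measurableSet_Ioc, integrableOn_Ioc_iff_integrableOn_Ioo]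
    exact hα
  have hsq : (fun x => α' x ^ 2) = (Set.Ioc x0 x1).indicator (fun x => |α x| ^ 2) := by
    funext x
    by_cases h : x ∈ Set.Ioc x0 x1 <;> simp [hα'def, h]
  have hα'2 : Integrable (fun x => α' x ^ 2) := by
    rw [hsq, integrable_indicator_iff measurableSet_Ioc, integrableOn_Ioc_iff_integrableOn_Ioo]
    exact hα2
  have hN : N₂ = Real.sqrt (∫ x, α' x ^ 2) := by
    rw [hN₂, hsq, integral_indicator measurableSet_Ioc, intervalIntegral.integral_of_le hx.le]
  have hNi : N₂ = Real.sqrt (∫ x in x0..x1, |α' x| ^ 2) := by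
    rw [hN₂, intervalIntegral.integral_of_le hx.le, intervalIntegral.integral_of_le hx.le,
      setIntegral_congr_fun measurableSet_Ioc fun s hs => ?_]
    simp only [hαα' s hs]
  have hb1 : Integrable (fun v => 2⁻¹ * α' (x0 + v / 2)) :=
    ((hα'.comp_add_left x0).comp_div two_ne_zero).const_mul _
  have hb2 : MemLp (fun v => 2⁻¹ * α' (x0 + v / 2)) 2 volume := by
    rw [memLp_two_iff_integrable_sq hb1.aestronglyMeasurable]
    simp_rw [mul_pow]
    exact ((hα'2.comp_add_left x0).comp_div two_ne_zero).const_mul _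
  set β : HL2 := hb2.toLp with hβdef
  have hβ : ∀ᵐ v, β v = 2⁻¹ * α' (x0 + v / 2) := hb2.coeFn_toLp
  have hβn : ‖β‖ = N₂ / Real.sqrt 2 := by
    rw [L2_norm_sqrt, hN, ← Real.sqrt_div' _ (by norm_num)]
    congr 1
    have : ∫ t, ‖β t‖ ^ 2 = ∫ t, 4⁻¹ * α' (x0 + t / 2) ^ 2 := by
      apply integral_congr_ae
      filter_upwards [hβ] with v hv
      rw [hv, Real.norm_eq_abs, sq_abs]; ring
    rw [this, integral_const_mul, Measure.integral_comp_div (fun u => α' (x0 + u) ^ 2) 2,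
      integral_add_left_eq_self (fun u => α' u ^ 2) x0]
    simp
    ring
  set a : ℝ := ∫ r in x0..y, |α' r| with ha
  have hab : a ≤ Real.sqrt (x1 - x0) * N₂ := by
    refine le_trans ?_ ((cs_bound hx.le hα' hα'2).trans_eq (by rw [← hNi]))
    have := intervalIntegral.integral_interval_sub_left (μ := volume) (f := fun r => |α' r|)
      (a := x0) (b := x1) (c := y) hα'.abs.intervalIntegrable hα'.abs.intervalIntegrable
    have h2 : 0 ≤ ∫ r in y..x1, |α' r| :=
      intervalIntegral.integral_nonneg hy1 fun _ _ => abs_nonneg _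
    linarith
  have hexp : HasSum (fun n : ℕ => ‖β‖ * (a ^ n / n.factorial)) (‖β‖ * Real.exp a) := by
    rw [Real.exp_eq_exp_ℝ]
    exact (NormedSpace.expSeries_div_hasSum_exp a).mul_left _
  have hbd := fun n => Ghx_norm hα' x0 β n y hy0.le
  have hsum : Summable fun n => Ghx x0 α' β n y :=
    Summable.of_norm_bounded hexp.summable hbd
  obtain ⟨G, hG⟩ := hsum
  have hGn : ‖G‖ ≤ (N₂ / Real.sqrt 2) * Real.exp (Real.sqrt (x1 - x0) * N₂) := by
    have h1 : ‖G‖ ≤ ‖β‖ * Real.exp a := by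
      rw [← hG.tsum_eq]
      exact tsum_of_norm_bounded hexp hbd
    refine h1.trans ?_
    rw [← hβn]
    gcongr
  set c : ℝ := 2 * (y - x0) with hc
  have hGs : SupL c G := by
    rw [supL_iff]
    have h1 := (LpToLpRestrictCLM ℝ ℝ ℝ volume 2 (Set.Icc 0 c)ᶜ).hasSum hG
    have h2 : ∀ n, LpToLpRestrictCLM ℝ ℝ ℝ volume 2 (Set.Icc 0 c)ᶜ (Ghx x0 α' β n y) = 0 :=
      fun n => (supL_iff _ _).1 (Ghx_sup hα' x0 β n y hy0.le)
    simp only [h2] at h1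
    exact h1.unique hasSum_zero
  set g : ℝ → ℂ := (Set.Icc 0 c).indicator fun v => (G v : ℂ) with hg
  have hgG : ∀ᵐ v, g v = (G v : ℂ) := by
    filter_upwards [hGs] with v hv
    by_cases h : v ∈ Set.Icc 0 c
    · simp [hg, h]
    · rw [hg, Set.indicator_of_notMem h, hv h]; simp
  have hgn : ∀ᵐ v, ‖g v‖ ^ 2 = ‖G v‖ ^ 2 := by
    filter_upwards [hgG] with v hv
    rw [hv, Complex.norm_real]
  refine ⟨g, fun t ht => Set.indicator_of_notMem ht _, ?_, ?_, ?_, ?_⟩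
  · rw [hg, integrable_indicator_iff measurableSet_Icc]
    have : IntegrableOn (fun v => G v) (Set.Icc 0 c) :=
      ((Lp.memLp G).restrict (Set.Icc 0 c)).integrable (by norm_num)
    exact this.ofReal
  · have : Integrable fun v => ‖G v‖ ^ 2 :=
      (memLp_two_iff_integrable_sq_norm (Lp.aestronglyMeasurable G)).1 (Lp.memLp G)
    refine this.congr ?_
    filter_upwards [hgn] with v hv using hv.symm
  · rw [integral_congr_ae hgn, ← L2_norm_sqrt]
    exact hGn
  · intro ω
    have h1 : HasSum (fun n => Aiter x0 α ω (n + 1) y) (pairL ω c G) := by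
      have h := (pairL ω c).hasSum hG
      have e : ∀ n, pairL ω c (Ghx x0 α' β n y) = Aiter x0 α ω (n + 1) y := fun n => by
        rw [pair_Ghx hα' β hβ ω c n y hy0.le le_rfl,
          Aiter_congr α α' hαα' ω (n + 1) y hy0.le hy1]
      simpa only [e] using h
    have h2 : harmE x0 y α ω = 1 + pairL ω c G := by
      have h3 := ((hasSum_nat_add_iff (f := fun n => Aiter x0 α ω n y) 1).1 h1).tsum_eq
      rw [harmE, h3, add_comm]
      simp [Aiter]
    rw [h2, pairL_full le_rfl hGs]
    congr 1
    apply integral_congr_ae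
    filter_upwards [hgG] with v hv
    rw [hv]
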